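/- Let X be a measurable space, T a positive integer, V > 0, ρ ≥ 0, G ≥ 0. Let f, g : X → ℝ and let π* be a probability measure on X with respect to which f and g are integrable and E_{π*}[g] ≤ 0. For each t = 1, …, T let β_t ≥ 0, β̃_t ≥ 0, let σ_t, σ̃_t : X → ℝ, and let f̄_t, ḡ_t : X → ℝ be integrable with respect to π* and satisfy, for all x ∈ X, f(x) ≤ f̄_t(x) ≤ f(x) + 2β_t·σ_t(x) and g(x) − 2β̃_t·σ̃_t(x) ≤ ḡ_t(x) ≤ g(x). Let x_t ∈ X with |ḡ_t(x_t)| ≤ G, let φ_1 = 0 and φ_{t+1} = Proj_{[0,ρ]}(φ_t + ḡ_t(x_t)/V), and suppose f̄_t(x_t) − φ_t·ḡ_t(x_t) ≥ f̄_t(x) − φ_t·ḡ_t(x) for all x ∈ X. Then for every φ ∈ [0, ρ], T·E_{π*}[f] − ∑_{t=1}^T f(x_t) + φ·∑_{t=1}^T g(x_t) ≤ 2·∑_{t=1}^T β_t·σ_t(x_t) + 2φ·∑_{t=1}^T β̃_t·σ̃_t(x_t) + (V/2)·φ² + T·G²/(2V). In particular, taking φ = 0, T·E_{π*}[f] − ∑_{t=1}^T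 f(x_t) ≤ 2·∑_{t=1}^T β_t·σ_t(x_t) + T·G²/(2V). -/

import Mathlib

/-!
The proof combines optimism with the regret of projected online gradient descent on the dual
variable. Since `φ t ≥ 0` and `∫ gbar t ≤ ∫ g ≤ 0`, optimism gives
`∫ f ≤ ∫ (fbar t - φ t * gbar t)`, and greediness bounds the latter by the value of the integrand
at `x t` (`integral_le_greedy_value`). With the sandwich bounds at `x t`, each round's
contribution is at most the confidence widths plus `(φ₀ - φ t) * gbar t (x t)`. The latter terms
are controlled by the potential `V / 2 * (φ t - φ₀) ^ 2`, because projecting onto `[0, ρ]` does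
not increase the distance to `φ₀ ∈ [0, ρ]` (`dual_step`); the potential differences telescope
(`dual_regret`).
-/

open Finset MeasureTheory

/-- Projecting onto `[0, ρ]` does not increase the distance to a point of `[0, ρ]`. -/
lemma sq_proj_sub_le {ρ a y : ℝ} (ha0 : 0 ≤ a) (haρ : a ≤ ρ) :
    (min ρ (max 0 y) - a) ^ 2 ≤ (y - a) ^ 2 := by
  rcases le_total 0 y with h | h
  · rw [max_eq_right h]
    rcases le_total ρ y with h' | h'
    · rw [min_eq_left h']
      nlinarith
    · rw [min_eq_right h']
  · rw [max_eq_left h, min_eq_right (ha0.trans haρ)]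
    nlinarith

/-- One step of projected gradient descent with step size `1 / V`, seen through the potential
`V / 2 * (p - a) ^ 2`. -/
lemma dual_step {V ρ G a p u : ℝ} (hV : 0 < V) (ha0 : 0 ≤ a) (haρ : a ≤ ρ) (hu : |u| ≤ G) :
    (a - p) * u + V / 2 * (min ρ (max 0 (p + u / V)) - a) ^ 2
      ≤ V / 2 * (p - a) ^ 2 + G ^ 2 / (2 * V) := by
  have h1 : V / 2 * (min ρ (max 0 (p + u / V)) - a) ^ 2 ≤ V / 2 * (p + u / V - a) ^ 2 :=
    mul_le_mul_of_nonneg_left (sq_proj_sub_le ha0 haρ) (by positivity)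
  have h2 : V / 2 * (p + u / V - a) ^ 2
      = V / 2 * (p - a) ^ 2 + (p - a) * u + u ^ 2 / (2 * V) := by
    field_simp
    ring
  have h3 : u ^ 2 / (2 * V) ≤ G ^ 2 / (2 * V) := by
    have : u ^ 2 ≤ G ^ 2 := sq_le_sq' (abs_le.mp hu).1 (abs_le.mp hu).2
    gcongr
  linarith

/-- Regret of the dual iterates against a fixed comparator `a ∈ [0, ρ]`. -/
lemma dual_regret {V ρ G a : ℝ} (hV : 0 < V) (ha0 : 0 ≤ a) (haρ : a ≤ ρ) (T : ℕ)
    (φ u : ℕ → ℝ) (hφ1 : φ 1 = 0) (hu : ∀ t ∈ Finset.Icc 1 T, |u t| ≤ G)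
    (hrec : ∀ t ∈ Finset.Icc 1 T, φ (t + 1) = min ρ (max 0 (φ t + u t / V))) :
    ∑ t ∈ Finset.Icc 1 T, (a - φ t) * u t ≤ V / 2 * a ^ 2 + (T : ℝ) * G ^ 2 / (2 * V) := by
  have hstep : ∀ t ∈ Finset.Icc 1 T, (a - φ t) * u t
      ≤ (V / 2 * (φ t - a) ^ 2 - V / 2 * (φ (t + 1) - a) ^ 2) + G ^ 2 / (2 * V) := by
    intro t ht
    have h := dual_step (p := φ t) hV ha0 haρ (hu t ht)
    rw [← hrec t ht] at h
    linarith
  have htel : ∀ n : ℕ, ∑ t ∈ Finset.Icc 1 n,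
      (V / 2 * (φ t - a) ^ 2 - V / 2 * (φ (t + 1) - a) ^ 2)
        = V / 2 * (φ 1 - a) ^ 2 - V / 2 * (φ (n + 1) - a) ^ 2 := by
    intro n
    induction n with
    | zero => simp
    | succ n ih =>
      rw [Finset.sum_Icc_succ_top (by omega), ih]
      ring
  have hsum := Finset.sum_le_sum hstep
  rw [Finset.sum_add_distrib, htel, hφ1, Finset.sum_const, Nat.card_Icc, nsmul_eq_mul,
    Nat.add_sub_cancel, ← mul_div_assoc] at hsum
  have hpos : 0 ≤ V / 2 * (φ (T + 1) - a) ^ 2 := by positivity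
  linarith

/-- Optimism: the greedily maximized Lagrangian value `M` dominates the mean reward of any
distribution that is feasible on average. -/
lemma integral_le_greedy_value {X : Type*} [MeasurableSpace X] {π : Measure X}
    [IsProbabilityMeasure π] {f g F H : X → ℝ} {p M : ℝ}
    (hf : Integrable f π) (hg : Integrable g π) (hF : Integrable F π) (hH : Integrable H π)
    (hgneg : ∫ y, g y ∂π ≤ 0) (hp : 0 ≤ p) (hfF : ∀ y, f y ≤ F y) (hHg : ∀ y, H y ≤ g y)
    (hM : ∀ y, F y - p * H y ≤ M) :
    ∫ y, f y ∂π ≤ M := by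
  have h1 : ∫ y, f y ∂π ≤ ∫ y, F y ∂π := integral_mono hf hF hfF
  have h2 : ∫ y, H y ∂π ≤ 0 := (integral_mono hH hg hHg).trans hgneg
  have h3 : ∫ y, (F y - p * H y) ∂π ≤ ∫ _, M ∂π :=
    integral_mono (hF.sub (hH.const_mul p)) (integrable_const M) hM
  rw [integral_sub hF (hH.const_mul p), integral_const_mul, integral_const, probReal_univ,
    one_smul] at h3
  linarith [mul_nonpos_of_nonneg_of_nonpos hp h2]

/-- Deterministic regret core of Theorem 1 for CKB-UCB: the bound
T·E_{π*}[f] − ∑f(x_t) + φ∑g(x_t) ≤ χ(T, φ), together with the φ = 0 regret bound. -/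
theorem ckb_ucb_regret_core {X : Type*} [MeasurableSpace X]
    (T : ℕ) (hT : 0 < T) (V ρ G : ℝ) (hV : 0 < V) (hρ : 0 ≤ ρ) (hG : 0 ≤ G)
    (f g : X → ℝ) (π : Measure X) [IsProbabilityMeasure π]
    (hf : Integrable f π) (hg : Integrable g π) (hgneg : ∫ y, g y ∂π ≤ 0)
    (β βt : ℕ → ℝ) (hβ : ∀ t ∈ Finset.Icc 1 T, 0 ≤ β t)
    (hβt : ∀ t ∈ Finset.Icc 1 T, 0 ≤ βt t)
    (σ σtil : ℕ → X → ℝ) (fbar gbar : ℕ → X → ℝ)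
    (hfbar_int : ∀ t ∈ Finset.Icc 1 T, Integrable (fbar t) π)
    (hgbar_int : ∀ t ∈ Finset.Icc 1 T, Integrable (gbar t) π)
    (hf_sandwich : ∀ t ∈ Finset.Icc 1 T, ∀ x : X,
      f x ≤ fbar t x ∧ fbar t x ≤ f x + 2 * β t * σ t x)
    (hg_sandwich : ∀ t ∈ Finset.Icc 1 T, ∀ x : X,
      g x - 2 * βt t * σtil t x ≤ gbar t x ∧ gbar t x ≤ g x)
    (x : ℕ → X)
    (hGb : ∀ t ∈ Finset.Icc 1 T, |gbar t (x t)| ≤ G)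
    (φ : ℕ → ℝ) (hφ1 : φ 1 = 0)
    (hrec : ∀ t ∈ Finset.Icc 1 T, φ (t + 1) = min ρ (max 0 (φ t + gbar t (x t) / V)))
    (hgreedy : ∀ t ∈ Finset.Icc 1 T, ∀ y : X,
      fbar t y - φ t * gbar t y ≤ fbar t (x t) - φ t * gbar t (x t)) :
    (∀ φ₀ ∈ Set.Icc (0 : ℝ) ρ,
      (T : ℝ) * (∫ y, f y ∂π) - ∑ t ∈ Finset.Icc 1 T, f (x t)
          + φ₀ * ∑ t ∈ Finset.Icc 1 T, g (x t)
        ≤ 2 * ∑ t ∈ Finset.Icc 1 T, β t * σ t (x t)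
          + 2 * φ₀ * ∑ t ∈ Finset.Icc 1 T, βt t * σtil t (x t)
          + V / 2 * φ₀ ^ 2 + (T : ℝ) * G ^ 2 / (2 * V)) ∧
    ((T : ℝ) * (∫ y, f y ∂π) - ∑ t ∈ Finset.Icc 1 T, f (x t)
        ≤ 2 * ∑ t ∈ Finset.Icc 1 T, β t * σ t (x t) + (T : ℝ) * G ^ 2 / (2 * V)) := by
  have hφ_nonneg : ∀ t ∈ Finset.Icc 1 T, 0 ≤ φ t := by
    intro t ht
    rw [Finset.mem_Icc] at ht
    rcases ht.1.eq_or_lt with h | h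
    · rw [← h, hφ1]
    · obtain ⟨s, rfl⟩ : ∃ s, t = s + 1 := ⟨t - 1, by omega⟩
      rw [hrec s (Finset.mem_Icc.mpr ⟨by omega, by omega⟩)]
      exact le_min hρ (le_max_left _ _)
  have main : ∀ φ₀ ∈ Set.Icc (0 : ℝ) ρ,
      (T : ℝ) * (∫ y, f y ∂π) - ∑ t ∈ Finset.Icc 1 T, f (x t)
          + φ₀ * ∑ t ∈ Finset.Icc 1 T, g (x t)
        ≤ 2 * ∑ t ∈ Finset.Icc 1 T, β t * σ t (x t)
          + 2 * φ₀ * ∑ t ∈ Finset.Icc 1 T, βt t * σtil t (x t)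
          + V / 2 * φ₀ ^ 2 + (T : ℝ) * G ^ 2 / (2 * V) := by
    rintro a ⟨ha0, haρ⟩
    have hround : ∀ t ∈ Finset.Icc 1 T, (∫ y, f y ∂π) - f (x t) + a * g (x t)
        ≤ 2 * (β t * σ t (x t)) + 2 * a * (βt t * σtil t (x t))
          + (a - φ t) * gbar t (x t) := by
      intro t ht
      have h1 := integral_le_greedy_value hf hg (hfbar_int t ht) (hgbar_int t ht) hgneg
        (hφ_nonneg t ht) (fun y => (hf_sandwich t ht y).1) (fun y => (hg_sandwich t ht y).2)
        (hgreedy t ht)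
      have h2 := (hf_sandwich t ht (x t)).2
      have h3 := mul_le_mul_of_nonneg_left (hg_sandwich t ht (x t)).1 ha0
      linarith
    have hsum := Finset.sum_le_sum hround
    simp only [Finset.sum_add_distrib, Finset.sum_sub_distrib, ← Finset.mul_sum,
      Finset.sum_const, Nat.card_Icc, nsmul_eq_mul, Nat.add_sub_cancel] at hsum
    have hdual := dual_regret hV ha0 haρ T φ (fun t => gbar t (x t)) hφ1 hGb hrec
    linarith
  refine ⟨main, ?_⟩
  simpa using main 0 ⟨le_rfl, hρ⟩
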